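/- Let J ⊂ ℂ be a Jordan curve, i.e. the image of a continuous injective map from the unit circle into ℂ, and assume J is rectifiable in the sense that its one-dimensional Hausdorff measure H¹(J) is finite. Let f be a nonnegative function on J, integrable with respect to H¹ restricted to J, with ∫_J f dH¹ > 0, and let F : J → ∂𝔻 be a homeomorphism onto the unit circle. Then there exists a unique point w ∈ 𝔻 such that ∫_J T_w(F(z)) f(z) dH¹(z) = 0 (as a complex number). -/

import Mathlib

open MeasureTheory Metric Filter
open scoped Classical

/-- The Möbius transformation `T_w(z) = (z+w)/(1+z·conj w)` of the closed unit disk. -/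
noncomputable def mobiusTc (w z : ℂ) : ℂ := (z + w) / (1 + z * (starRingEnd ℂ) w)


/-- The function `g` takes values in the unit circle and its law has no atoms. -/
structure CircleNoAtom {α : Type*} [MeasurableSpace α] (ν : Measure α) (g : α → ℂ) : Prop where
  meas : AEStronglyMeasurable g ν
  norm_one : ∀ᵐ x ∂ν, ‖g x‖ = 1
  ne : ∀ c : ℂ, ∀ᵐ x ∂ν, g x ≠ c

theorem wein_conj_mul (z : ℂ) : z * (starRingEnd ℂ) z = ((‖z‖ ^ 2 : ℝ) : ℂ) := by
  rw [Complex.mul_conj, Complex.normSq_eq_norm_sq]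

theorem wein_den_ne {z w : ℂ} (hz : ‖z‖ ≤ 1) (hw : ‖w‖ < 1) :
    1 + z * (starRingEnd ℂ) w ≠ 0 := by
  intro h
  have h1 : z * (starRingEnd ℂ) w = -1 := by linear_combination h
  have h2 : ‖z‖ * ‖w‖ = 1 := by
    have := congrArg norm h1
    simpa using this
  nlinarith [norm_nonneg z, norm_nonneg w]

theorem wein_norm_num {z w : ℂ} (hz : ‖z‖ = 1) :
    ‖z + w‖ = ‖1 + z * (starRingEnd ℂ) w‖ := by
  have h : z + w = z * (starRingEnd ℂ) (1 + z * (starRingEnd ℂ) w) := by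
    have := wein_conj_mul z
    rw [hz] at this
    simp only [map_add, map_mul, map_one, Complex.conj_conj]
    push_cast at this
    linear_combination (-w) * this
  rw [h, norm_mul, hz, one_mul, Complex.norm_conj]

theorem wein_norm_le {z w : ℂ} (hz : ‖z‖ = 1) : ‖mobiusTc w z‖ ≤ 1 := by
  unfold mobiusTc
  rw [norm_div, wein_norm_num hz]
  exact div_self_le_one _

theorem wein_norm_eq {z w : ℂ} (hz : ‖z‖ = 1) (hw : ‖w‖ < 1) : ‖mobiusTc w z‖ = 1 := by
  unfold mobiusTc
  rw [norm_div, wein_norm_num hz]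
  exact div_self (norm_ne_zero_iff.2 (wein_den_ne hz.le hw))

theorem wein_sphere {z w : ℂ} (hw : ‖w‖ = 1) (h : z ≠ -w) : mobiusTc w z = w := by
  have hne : z + w ≠ 0 := fun h' => h (by linear_combination h')
  have h1 : z + w = w * (1 + z * (starRingEnd ℂ) w) := by
    have := wein_conj_mul w
    rw [hw] at this
    push_cast at this
    linear_combination (-z) * this
  have h2 : 1 + z * (starRingEnd ℂ) w ≠ 0 := by
    intro h2; rw [h2, mul_zero] at h1; exact hne h1
  unfold mobiusTc
  rw [div_eq_iff h2, h1]

theorem wein_ball {w h : ℂ} (hw : ‖w‖ < 1) (hh : ‖h‖ < 1) :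
    ‖(w + h) / (1 + h * (starRingEnd ℂ) w)‖ < 1 := by
  have hd := wein_den_ne hh.le hw
  rw [norm_div, div_lt_one (norm_pos_iff.2 hd)]
  have e : ‖1 + h * (starRingEnd ℂ) w‖ ^ 2 - ‖w + h‖ ^ 2
      = (1 - ‖w‖ ^ 2) * (1 - ‖h‖ ^ 2) := by
    simp only [← Complex.normSq_eq_norm_sq, Complex.normSq_apply]
    simp
    ring
  have : 0 < (1 - ‖w‖ ^ 2) * (1 - ‖h‖ ^ 2) := by
    apply mul_pos <;> nlinarith [norm_nonneg w, norm_nonneg h]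
  exact lt_of_pow_lt_pow_left₀ 2 (norm_nonneg _) (by linarith)

theorem wein_comp {z w h : ℂ} (hz : ‖z‖ = 1) (hw : ‖w‖ < 1) (hh : ‖h‖ < 1) :
    mobiusTc h (mobiusTc w z) =
      ((1 + h * (starRingEnd ℂ) w) / (starRingEnd ℂ) (1 + h * (starRingEnd ℂ) w)) *
        mobiusTc ((w + h) / (1 + h * (starRingEnd ℂ) w)) z := by
  have h1 := wein_den_ne hz.le hw
  have h2 := wein_den_ne hh.le hw
  have h2' : 1 + (starRingEnd ℂ) h * w ≠ 0 := by
    have := (map_ne_zero (starRingEnd ℂ)).2 h2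
    simpa using this
  have h3 := wein_den_ne (wein_norm_eq hz hw).le hh
  have h4 := wein_den_ne hz.le (wein_ball hw hh)
  unfold mobiusTc at *
  simp only [map_add, map_mul, map_one, Complex.conj_conj, map_div₀] at *
  have h3' : 1 + z * (starRingEnd ℂ) w + (z + w) * (starRingEnd ℂ) h ≠ 0 := by
    intro h'
    apply h3
    field_simp
    rw [h', mul_zero]
  have h4' : 1 + (starRingEnd ℂ) h * w + z * ((starRingEnd ℂ) w + (starRingEnd ℂ) h) ≠ 0 := by
    intro h'
    apply h3'
    linear_combination h'
  have e1 : ((z + w) / (1 + z * (starRingEnd ℂ) w) + h) /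
      (1 + (z + w) / (1 + z * (starRingEnd ℂ) w) * (starRingEnd ℂ) h) =
      (z + w + h * (1 + z * (starRingEnd ℂ) w)) /
        (1 + z * (starRingEnd ℂ) w + (z + w) * (starRingEnd ℂ) h) := by
    rw [div_eq_div_iff h3 h3']
    field_simp
  have e2 : (z + (w + h) / (1 + h * (starRingEnd ℂ) w)) =
      (z * (1 + h * (starRingEnd ℂ) w) + (w + h)) / (1 + h * (starRingEnd ℂ) w) := by
    field_simp
  have e3 : (1 + z * (((starRingEnd ℂ) w + (starRingEnd ℂ) h) / (1 + (starRingEnd ℂ) h * w))) =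
      (1 + (starRingEnd ℂ) h * w + z * ((starRingEnd ℂ) w + (starRingEnd ℂ) h)) /
        (1 + (starRingEnd ℂ) h * w) := by
    field_simp
  rw [e1, e2, e3]
  have e4 : 1 + z * (starRingEnd ℂ) w + (z + w) * (starRingEnd ℂ) h =
      1 + (starRingEnd ℂ) h * w + z * ((starRingEnd ℂ) w + (starRingEnd ℂ) h) := by ring
  have e5 : z + w + h * (1 + z * (starRingEnd ℂ) w) =
      z * (1 + h * (starRingEnd ℂ) w) + (w + h) := by ring
  have e6 : ∀ a b N D : ℂ, a ≠ 0 → b ≠ 0 → D ≠ 0 → N / D = a / b * (N / a / (D / b)) := by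
    intro a b N D ha hb hD
    field_simp
  rw [e4, e5]
  exact e6 _ _ _ _ h2 h2' h4'

section
variable {α : Type*} [MeasurableSpace α] {ν : Measure α} [IsFiniteMeasure ν] {g : α → ℂ}

theorem wein_int_pos (hν : ν ≠ 0) {u : α → ℝ} (hu : Integrable u ν) (hpos : ∀ᵐ x ∂ν, 0 < u x) :
    0 < ∫ x, u x ∂ν := by
  have h0 : 0 ≤ᵐ[ν] u := hpos.mono fun x hx => hx.le
  refine lt_of_le_of_ne (integral_nonneg_of_ae h0) fun h => hν ?_
  have := (integral_eq_zero_iff_of_nonneg_ae h0 hu).1 h.symm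
  rw [← ae_eq_bot, ← Filter.eventually_false_iff_eq_bot]
  filter_upwards [hpos, this] with x h1 h2
  rw [h2] at h1
  exact lt_irrefl _ h1

theorem CircleNoAtom.integrable (hg : CircleNoAtom ν g) : Integrable g ν :=
  Integrable.of_bound hg.meas 1 (hg.norm_one.mono fun _ h => h.le)

theorem CircleNoAtom.sq (hg : CircleNoAtom ν g) : CircleNoAtom ν (fun x => g x ^ 2) where
  meas := hg.meas.pow 2
  norm_one := hg.norm_one.mono fun x h => by simp [h]
  ne c := by
    obtain ⟨s, hs⟩ := IsAlgClosed.exists_pow_nat_eq c (n := 2) (by norm_num)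
    filter_upwards [hg.ne s, hg.ne (-s)] with x h1 h2 h
    rw [← hs, sq_eq_sq_iff_eq_or_eq_neg] at h
    exact h.elim h1 h2

theorem wein_meas (w : ℂ) (hg : AEStronglyMeasurable g ν) :
    AEStronglyMeasurable (fun x => mobiusTc w (g x)) ν := by
  unfold mobiusTc
  have := hg.aemeasurable
  exact AEMeasurable.aestronglyMeasurable (by fun_prop)

theorem CircleNoAtom.mobius (hg : CircleNoAtom ν g) {w : ℂ} (hw : ‖w‖ < 1) :
    CircleNoAtom ν (fun x => mobiusTc w (g x)) where
  meas := wein_meas w hg.meas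
  norm_one := hg.norm_one.mono fun x h => wein_norm_eq h hw
  ne c := by
    filter_upwards [hg.norm_one, hg.ne ((c - w) / (1 - c * (starRingEnd ℂ) w))] with x h1 h2 h
    have hd := wein_den_ne h1.le hw
    unfold mobiusTc at h
    rw [div_eq_iff hd] at h
    have h3 : g x * (1 - c * (starRingEnd ℂ) w) = c - w := by linear_combination h
    by_cases h4 : 1 - c * (starRingEnd ℂ) w = 0
    · rw [h4, mul_zero] at h3
      have h5 : c = w := by linear_combination -h3
      rw [h5, wein_conj_mul] at h4
      have h6 : (‖w‖ ^ 2 : ℝ) = 1 := by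
        have : ((‖w‖ ^ 2 : ℝ) : ℂ) = 1 := by linear_combination -h4
        exact_mod_cast this
      nlinarith [norm_nonneg w]
    · exact h2 (by rw [eq_div_iff h4, h3])

theorem CircleNoAtom.norm_lt (hg : CircleNoAtom ν g) (hν : ν ≠ 0) :
    ‖∫ x, g x ∂ν‖ < ν.real Set.univ := by
  obtain ⟨c, hc, hcI⟩ : ∃ c : ℂ, ‖c‖ = 1 ∧ c * ∫ x, g x ∂ν = (‖∫ x, g x ∂ν‖ : ℂ) := by
    by_cases h : ∫ x, g x ∂ν = 0
    · exact ⟨1, by simp, by simp [h]⟩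
    · have hn : (‖∫ x, g x ∂ν‖ : ℂ) ≠ 0 := by simpa using h
      refine ⟨(starRingEnd ℂ) (∫ x, g x ∂ν) / ‖∫ x, g x ∂ν‖, ?_, ?_⟩
      · rw [norm_div, Complex.norm_conj]
        simp [h]
      · rw [div_mul_eq_mul_div, mul_comm, wein_conj_mul, div_eq_iff hn]
        push_cast; ring
  have hc0 : c ≠ 0 := by intro h; simp [h] at hc
  have hi : Integrable (fun x => c * g x) ν := hg.integrable.const_mul c
  have hr : Integrable (fun x => (c * g x).re) ν := hi.re
  have key : 0 < ∫ x, (1 - (c * g x).re) ∂ν := by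
    refine wein_int_pos hν ((integrable_const _).sub hr) ?_
    filter_upwards [hg.norm_one, hg.ne c⁻¹] with x h1 h2
    have h3 : ‖c * g x‖ = 1 := by simp [hc, h1]
    have h4 : (c * g x).re ≤ 1 := (Complex.re_le_norm _).trans h3.le
    rcases h4.lt_or_eq with h5 | h5
    · linarith
    · exfalso
      apply h2
      have h6 : (c * g x).im = 0 := by
        have := Complex.sq_norm (c * g x)
        rw [h3, Complex.normSq_apply, h5] at this
        nlinarith
      have h7 : c * g x = 1 := Complex.ext (by simpa using h5) (by simpa using h6)
      exact eq_inv_of_mul_eq_one_right h7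
  rw [integral_sub (integrable_const _) hr] at key
  have h8 : ∫ x, (c * g x).re ∂ν = ‖∫ x, g x ∂ν‖ := by
    have : ∫ x, (c * g x).re ∂ν = (∫ x, c * g x ∂ν).re := integral_re hi
    rw [this, integral_const_mul, hcI, Complex.ofReal_re]
  rw [h8] at key
  simp at key
  exact key

theorem wein_remainder {z h : ℂ} (hz : ‖z‖ = 1) (hh : ‖h‖ ≤ 1 / 2) :
    ‖mobiusTc h z - (z + h - z ^ 2 * (starRingEnd ℂ) h)‖ ≤ 4 * ‖h‖ ^ 2 := by
  have hd := wein_den_ne hz.le (lt_of_le_of_lt hh (by norm_num))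
  have e : mobiusTc h z - (z + h - z ^ 2 * (starRingEnd ℂ) h) =
      (z ^ 3 * (starRingEnd ℂ) h ^ 2 - z * h * (starRingEnd ℂ) h) /
        (1 + z * (starRingEnd ℂ) h) := by
    unfold mobiusTc
    rw [eq_div_iff hd, sub_mul, div_mul_cancel₀ _ hd]
    ring
  have hlow : 1 / 2 ≤ ‖1 + z * (starRingEnd ℂ) h‖ := by
    have h1 := norm_sub_le_norm_add (1 : ℂ) (z * (starRingEnd ℂ) h)
    rw [norm_mul, Complex.norm_conj, hz, norm_one] at h1
    linarith
  have hup : ‖z ^ 3 * (starRingEnd ℂ) h ^ 2 - z * h * (starRingEnd ℂ) h‖ ≤ 2 * ‖h‖ ^ 2 := by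
    refine (norm_sub_le _ _).trans ?_
    simp only [norm_mul, norm_pow, Complex.norm_conj, hz]
    nlinarith
  rw [e, norm_div, div_le_iff₀ (by linarith)]
  nlinarith [sq_nonneg ‖h‖]

theorem wein_descent (hg : CircleNoAtom ν g) (hν : ν ≠ 0) (hV : ∫ x, g x ∂ν ≠ 0) :
    ∃ h : ℂ, ‖h‖ < 1 ∧ ‖∫ x, mobiusTc h (g x) ∂ν‖ < ‖∫ x, g x ∂ν‖ := by
  have hm := hg.sq.norm_lt hν
  set V := ∫ x, g x ∂ν with hVdef
  set m := ∫ x, g x ^ 2 ∂ν with hmdef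
  set M := ν.real Set.univ with hMdef
  have hM : 0 < M := lt_of_le_of_lt (norm_nonneg _) hm
  have hVpos : 0 < ‖V‖ := norm_pos_iff.2 hV
  have hD : ((M ^ 2 - ‖m‖ ^ 2 : ℝ) : ℂ) ≠ 0 := by
    have : 0 < M ^ 2 - ‖m‖ ^ 2 := by nlinarith [norm_nonneg m]
    exact_mod_cast this.ne'
  obtain ⟨k, hk⟩ : ∃ k : ℂ, M * k - m * (starRingEnd ℂ) k = -V := by
    refine ⟨(-(M * V) - m * (starRingEnd ℂ) V) / ((M ^ 2 - ‖m‖ ^ 2 : ℝ) : ℂ), ?_⟩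
    simp only [map_div₀, map_sub, map_neg, map_mul, Complex.conj_conj, Complex.conj_ofReal]
    rw [← mul_div_assoc, ← mul_div_assoc, ← sub_div, div_eq_iff hD]
    have := wein_conj_mul m
    push_cast at this ⊢
    linear_combination V * this
  obtain ⟨t, ht0, ht1, ht2, ht3⟩ : ∃ t : ℝ, 0 < t ∧ t ≤ 1 ∧ t * ‖k‖ ≤ 1 / 2 ∧
      t * (4 * M * ‖k‖ ^ 2) < ‖V‖ := by
    have e1 : ∀ᶠ t in nhds (0 : ℝ), t < 1 := eventually_lt_nhds one_pos
    have e2 : ∀ᶠ t in nhds (0 : ℝ), t * ‖k‖ < 1 / 2 := by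
      have : Continuous fun t : ℝ => t * ‖k‖ := by fun_prop
      exact this.continuousAt.eventually_lt continuousAt_const (by norm_num)
    have e3 : ∀ᶠ t in nhds (0 : ℝ), t * (4 * M * ‖k‖ ^ 2) < ‖V‖ := by
      have : Continuous fun t : ℝ => t * (4 * M * ‖k‖ ^ 2) := by fun_prop
      exact this.continuousAt.eventually_lt continuousAt_const (by simpa using hVpos)
    have e := (e1.and (e2.and e3)).filter_mono (nhdsWithin_le_nhds (s := Set.Ioi (0 : ℝ)))
    obtain ⟨t, ⟨h1, h2, h3⟩, h0⟩ := (e.and self_mem_nhdsWithin).exists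
    exact ⟨t, h0, h1.le, h2.le, h3⟩
  have hn : ‖(t : ℂ) * k‖ = t * ‖k‖ := by
    rw [norm_mul, Complex.norm_real, Real.norm_of_nonneg ht0.le]
  have hlt : ‖(t : ℂ) * k‖ < 1 := by rw [hn]; linarith
  refine ⟨t * k, hlt, ?_⟩
  have i1 : Integrable (fun x => g x + t * k) ν := hg.integrable.add (integrable_const _)
  have i2 : Integrable (fun x => g x ^ 2 * (starRingEnd ℂ) (t * k)) ν :=
    hg.sq.integrable.mul_const _
  have hlin : ∫ x, (g x + t * k - g x ^ 2 * (starRingEnd ℂ) (t * k)) ∂ν = (1 - t : ℝ) * V := by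
    have e1 : ∫ x, g x ^ 2 * (starRingEnd ℂ) (t * k) ∂ν = m * (starRingEnd ℂ) (t * k) :=
      integral_mul_const _ _
    rw [integral_sub i1 i2, e1, integral_add hg.integrable (integrable_const _),
      integral_const, ← hVdef, ← hMdef]
    simp only [map_mul, Complex.conj_ofReal, Complex.real_smul]
    push_cast
    linear_combination (t : ℂ) * hk
  have hrem : ‖∫ x, mobiusTc (t * k) (g x) ∂ν - (1 - t : ℝ) * V‖ ≤ 4 * (t * ‖k‖) ^ 2 * M := by
    have i3 : Integrable (fun x => g x + t * k - g x ^ 2 * (starRingEnd ℂ) (t * k)) ν :=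
      i1.sub i2
    rw [← hlin, ← integral_sub (hg.mobius hlt).integrable i3]
    refine norm_integral_le_of_norm_le_const ?_
    filter_upwards [hg.norm_one] with x hx
    rw [← hn]
    exact wein_remainder hx (by rw [hn]; exact ht2)
  have h2 : ‖((1 - t : ℝ) : ℂ) * V‖ = (1 - t) * ‖V‖ := by
    rw [norm_mul, Complex.norm_real, Real.norm_of_nonneg (by linarith)]
  have h3 := norm_le_insert' (∫ x, mobiusTc (t * k) (g x) ∂ν) ((1 - t : ℝ) * V)
  rw [h2] at h3
  nlinarith

theorem wein_contOn (hg : CircleNoAtom ν g) :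
    ContinuousOn (fun w => ∫ x, mobiusTc w (g x) ∂ν) (closedBall (0 : ℂ) 1) := by
  intro w hw
  have hw1 : ‖w‖ ≤ 1 := by simpa using hw
  refine continuousWithinAt_of_dominated (bound := fun _ => 1) ?_ ?_ (integrable_const _) ?_
  · exact Eventually.of_forall fun v => wein_meas v hg.meas
  · exact Eventually.of_forall fun v => hg.norm_one.mono fun x hx => wein_norm_le hx
  · filter_upwards [hg.norm_one, hg.ne (-w)] with x h1 h2
    apply ContinuousAt.continuousWithinAt
    unfold mobiusTc
    have hd : 1 + g x * (starRingEnd ℂ) w ≠ 0 := by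
      rw [← norm_ne_zero_iff, ← wein_norm_num h1, norm_ne_zero_iff]
      intro h
      exact h2 (by linear_combination h)
    refine ContinuousAt.div (by fun_prop) ?_ hd
    have : Continuous fun v : ℂ => 1 + g x * (starRingEnd ℂ) v :=
      continuous_const.add (continuous_const.mul Complex.continuous_conj)
    exact this.continuousAt

theorem wein_int_comp (hg : CircleNoAtom ν g) {w h : ℂ} (hw : ‖w‖ < 1) (hh : ‖h‖ < 1) :
    ∫ x, mobiusTc h (mobiusTc w (g x)) ∂ν =
      ((1 + h * (starRingEnd ℂ) w) / (starRingEnd ℂ) (1 + h * (starRingEnd ℂ) w)) *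
        ∫ x, mobiusTc ((w + h) / (1 + h * (starRingEnd ℂ) w)) (g x) ∂ν := by
  rw [← integral_const_mul]
  refine integral_congr_ae ?_
  filter_upwards [hg.norm_one] with x hx
  exact wein_comp hx hw hh

theorem wein_mono {z h : ℂ} (hz : ‖z‖ = 1) (hh : ‖h‖ < 1) (h0 : h ≠ 0)
    (h1 : z ≠ h / ‖h‖) (h2 : z ≠ -(h / ‖h‖)) :
    0 < ((starRingEnd ℂ) h * (mobiusTc h z - z)).re := by
  have hd := wein_den_ne hz.le hh
  set u := z * (starRingEnd ℂ) h with hu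
  have hun : ‖u‖ = ‖h‖ := by rw [hu, norm_mul, hz, one_mul, Complex.norm_conj]
  have hhn : (‖h‖ : ℂ) ≠ 0 := by simpa using h0
  have e : (starRingEnd ℂ) h * (mobiusTc h z - z) = (((‖u‖ ^ 2 : ℝ) : ℂ) - u ^ 2) / (1 + u) := by
    rw [hun, ← wein_conj_mul h]
    unfold mobiusTc
    rw [eq_div_iff hd, mul_assoc, sub_mul, ← hu, div_mul_cancel₀ _ hd, hu]
    ring
  have hzu : z * ((‖h‖ ^ 2 : ℝ) : ℂ) = u * h := by
    rw [hu, ← wein_conj_mul h]; ring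
  have him : u.im ≠ 0 := by
    intro him
    have hur : u = (u.re : ℂ) := Complex.ext (by simp) (by simp [him])
    have hsq : u.re ^ 2 = ‖h‖ ^ 2 := by
      rw [← hun, Complex.sq_norm, Complex.normSq_apply, him]; ring
    rcases sq_eq_sq_iff_eq_or_eq_neg.1 hsq with h3 | h3
    · apply h1
      rw [eq_div_iff hhn]
      apply mul_right_cancel₀ hhn
      rw [hur, h3] at hzu
      push_cast at hzu
      linear_combination hzu
    · apply h2
      rw [← neg_div, eq_div_iff hhn]
      apply mul_right_cancel₀ hhn
      rw [hur, h3] at hzu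
      push_cast at hzu
      linear_combination hzu
  have hns : 0 < Complex.normSq (1 + u) := Complex.normSq_pos.2 hd
  have e2 : ((((‖u‖ ^ 2 : ℝ) : ℂ) - u ^ 2) / (1 + u)).re =
      2 * u.im ^ 2 / Complex.normSq (1 + u) := by
    rw [Complex.div_re, ← add_div, Complex.sq_norm, Complex.normSq_apply u]
    congr 1
    simp [pow_two]
    ring
  rw [e, e2]
  positivity

theorem wein_unique_aux (hg : CircleNoAtom ν g) (hν : ν ≠ 0) {h : ℂ} (hh : ‖h‖ < 1)
    (hV : ∫ x, g x ∂ν = 0) (hV' : ∫ x, mobiusTc h (g x) ∂ν = 0) : h = 0 := by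
  by_contra h0
  have hi : Integrable (fun x => (starRingEnd ℂ) h * (mobiusTc h (g x) - g x)) ν :=
    ((hg.mobius hh).integrable.sub hg.integrable).const_mul _
  have hpos : 0 < ∫ x, ((starRingEnd ℂ) h * (mobiusTc h (g x) - g x)).re ∂ν := by
    refine wein_int_pos hν hi.re ?_
    filter_upwards [hg.norm_one, hg.ne (h / ‖h‖), hg.ne (-(h / ‖h‖))] with x h1 h2 h3
    exact wein_mono h1 hh h0 h2 h3
  have : ∫ x, ((starRingEnd ℂ) h * (mobiusTc h (g x) - g x)).re ∂ν =
      (∫ x, (starRingEnd ℂ) h * (mobiusTc h (g x) - g x) ∂ν).re := integral_re hi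
  rw [this, integral_const_mul, integral_sub (hg.mobius hh).integrable hg.integrable,
    hV, hV'] at hpos
  simp at hpos

theorem wein_abstract (hg : CircleNoAtom ν g) (hν : ν ≠ 0) :
    ∃! w : ℂ, w ∈ ball (0 : ℂ) 1 ∧ ∫ x, mobiusTc w (g x) ∂ν = 0 := by
  apply existsUnique_of_exists_of_unique
  · obtain ⟨w, hw, hmin⟩ := (isCompact_closedBall (0 : ℂ) 1).exists_isMinOn
      ⟨0, by simp⟩ (wein_contOn hg).norm
    have hw1 : ‖w‖ ≤ 1 := by simpa using hw
    have hlt : ‖w‖ < 1 := by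
      refine lt_of_le_of_ne hw1 fun hw2 => ?_
      have h1 : ∫ x, mobiusTc w (g x) ∂ν = ν.real Set.univ * w := by
        have : ∫ x, mobiusTc w (g x) ∂ν = ∫ _, w ∂ν :=
          integral_congr_ae ((hg.ne (-w)).mono fun x hx => wein_sphere hw2 hx)
        rw [this, integral_const, Complex.real_smul]
      have h2 := hmin (show (0 : ℂ) ∈ closedBall (0 : ℂ) 1 by simp)
      simp only [Set.mem_ofPred_eq] at h2
      rw [h1, norm_mul, hw2, Complex.norm_real, Real.norm_of_nonneg measureReal_nonneg] at h2
      have h3 := hg.norm_lt hν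
      have h4 : (fun x => mobiusTc 0 (g x)) = g := by funext x; simp [mobiusTc]
      rw [h4] at h2
      linarith
    refine ⟨w, by simpa using hlt, ?_⟩
    by_contra hV
    obtain ⟨h, hh, hd⟩ := wein_descent (hg.mobius hlt) hν hV
    rw [wein_int_comp hg hlt hh, norm_mul, norm_div, Complex.norm_conj,
      div_self (norm_ne_zero_iff.2 (wein_den_ne hh.le hlt)), one_mul] at hd
    have hb := wein_ball hlt hh
    have h2 := hmin (show (w + h) / (1 + h * (starRingEnd ℂ) w) ∈ closedBall (0 : ℂ) 1 by
      simpa using hb.le)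
    simp only [Set.mem_ofPred_eq] at h2
    linarith
  · rintro a b ⟨ha, hVa⟩ ⟨hb, hVb⟩
    have ha1 : ‖a‖ < 1 := by simpa using ha
    have hb1 : ‖b‖ < 1 := by simpa using hb
    have hna : ‖-a‖ < 1 := by simpa using ha1
    have hh := wein_ball hna hb1
    have hd := wein_den_ne hb1.le hna
    set h := (-a + b) / (1 + b * (starRingEnd ℂ) (-a)) with hdef
    have hd2 := wein_den_ne hh.le ha1
    have hhe : h * (1 + b * (starRingEnd ℂ) (-a)) = -a + b := by
      rw [hdef, div_mul_cancel₀ _ hd]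
    have hcomp : (a + h) / (1 + h * (starRingEnd ℂ) a) = b := by
      rw [div_eq_iff hd2]
      rw [map_neg] at hhe
      linear_combination hhe
    have hz := wein_unique_aux (hg.mobius ha1) hν hh hVa (by
      rw [wein_int_comp hg ha1 hh, hcomp, hVb, mul_zero])
    rw [hz, zero_mul] at hhe
    linear_combination hhe

end

/-- Weinstock orthogonality on a rectifiable Jordan curve: for a nonnegative density `f`
on the curve (integrable for one-dimensional Hausdorff measure) with positive total
integral, and a homeomorphism `F` from the curve onto the unit circle, there is a unique
point `w` in the disk such that `T_w ∘ F` is orthogonal to `f`. -/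
theorem weinstock_orthogonality_jordan_curve
    (γ : ℂ → ℂ) (hγ_cont : ContinuousOn γ (sphere (0 : ℂ) 1))
    (hγ_inj : Set.InjOn γ (sphere (0 : ℂ) 1))
    (J : Set ℂ) (hJ : J = γ '' sphere (0 : ℂ) 1)
    (hJ_rect : μH[1] J < ⊤)
    (f : ℂ → ℝ) (hf_nonneg : ∀ z ∈ J, 0 ≤ f z)
    (hf_int : Integrable f ((μH[1]).restrict J))
    (hf_pos : 0 < ∫ z in J, f z ∂μH[1])
    (F : ℂ → ℂ) (hF_bij : Set.BijOn F J (sphere (0 : ℂ) 1))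
    (hF_cont : ContinuousOn F J)
    (hF_inv_cont : ContinuousOn (Function.invFunOn F J) (sphere (0 : ℂ) 1)) :
    ∃! w : ℂ, w ∈ ball (0 : ℂ) 1 ∧
      ∫ z in J, f z • mobiusTc w (F z) ∂μH[1] = 0 := by
  have hJc : IsCompact J := by
    rw [hJ]; exact (isCompact_sphere (0 : ℂ) 1).image_of_continuousOn hγ_cont
  have hJm : MeasurableSet J := hJc.measurableSet
  have hna : NullSingletonClass (μH[1] : Measure ℂ) :=
    Measure.nullSingletonClass_hausdorff ℂ one_pos
  set μ : Measure ℂ := (μH[1]).restrict J with hμ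
  have hfn : 0 ≤ᵐ[μ] f := (ae_restrict_iff' hJm).2 (Eventually.of_forall hf_nonneg)
  have hfm : AEMeasurable (fun z => ENNReal.ofReal (f z)) μ :=
    hf_int.aestronglyMeasurable.aemeasurable.ennreal_ofReal
  set ν : Measure ℂ := μ.withDensity (fun z => ENNReal.ofReal (f z)) with hνdef
  have : IsFiniteMeasure ν := isFiniteMeasure_withDensity_ofReal hf_int.2
  have hac : ν ≪ μ := withDensity_absolutelyContinuous _ _
  have hg : CircleNoAtom ν F := by
    refine ⟨?_, ?_, fun c => ?_⟩
    · exact (hF_cont.aestronglyMeasurable hJm).mono_ac hac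
    · refine hac.ae_le ((ae_restrict_iff' hJm).2 (Eventually.of_forall fun z hz => ?_))
      simpa using hF_bij.mapsTo hz
    · refine hac.ae_le ((ae_restrict_iff' hJm).2 ?_)
      have hs : (J ∩ F ⁻¹' {c}).Subsingleton := by
        rintro x ⟨hx, hx'⟩ y ⟨hy, hy'⟩
        exact hF_bij.injOn hx hy (by rw [hx', hy'])
      have h0 := hs.measure_zero (μH[1] : Measure ℂ)
      filter_upwards [measure_eq_zero_iff_ae_notMem.1 h0] with z hz hzJ hzc
      exact hz ⟨hzJ, hzc⟩
  have hint : ∀ G : ℂ → ℂ, ∫ z, G z ∂ν = ∫ z, f z • G z ∂μ := by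
    intro G
    rw [hνdef, integral_withDensity_eq_integral_toReal_smul₀ hfm (by simp)]
    refine integral_congr_ae ?_
    filter_upwards [hfn] with z hz
    rw [ENNReal.toReal_ofReal hz]
  have hν : ν ≠ 0 := by
    intro h
    rw [hνdef, withDensity_eq_zero_iff hfm] at h
    have : ∫ z, f z ∂μ = 0 := by
      apply integral_eq_zero_of_ae
      filter_upwards [h, hfn] with z h1 h2
      exact le_antisymm (ENNReal.ofReal_eq_zero.1 h1) h2
    linarith
  have := wein_abstract hg hν
  simpa only [hint] using this
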